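/- Let G be a finite oriented multigraph with a total order on E(G), A a finite abelian group, and b : V(G) → A locally zero-sum. Then the signless coefficients a_i(G,b) (the number of i-edge subsets S with G−S b-compatible and S containing no b-compatible broken bond) do not depend on the choice of the total order on E(G). -/

import Mathlib

open Finset

attribute [local instance] Classical.propDecidable

universe u v w

/-- Adjacency through a present edge in the spanning subgraph with edge predicate `ok`. -/
def edgeRel {V E : Type*} (head tail : E → V) (ok : E → Prop) (u v : V) : Prop :=
  ∃ e, ok e ∧ ((head e = u ∧ tail e = v) ∨ (head e = v ∧ tail e = u))

/-- Reachability (same connected component) in the spanning subgraph. -/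
def Reach {V E : Type*} (head tail : E → V) (ok : E → Prop) : V → V → Prop :=
  Relation.EqvGen (edgeRel head tail ok)

/-- Number of connected components of the spanning subgraph. -/
noncomputable def ncomp {V E : Type*} (head tail : E → V) (ok : E → Prop) : ℕ :=
  Nat.card (Quotient (Relation.EqvGen.setoid (edgeRel head tail ok)))

/-- Boundary of an edge-valued function, via the orientation `head`/`tail`. -/
noncomputable def bdry {V E A : Type*} [Fintype E] [AddCommGroup A]
    (head tail : E → V) (f : E → A) (v : V) : A :=
  ∑ e : E, ((if head e = v then f e else 0) - (if tail e = v then f e else 0))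

/-- Boundary of an edge-valued function on the spanning subgraph with edges `ok`. -/
noncomputable def bdrySub {V E A : Type*} [Fintype E] [AddCommGroup A]
    (head tail : E → V) (ok : E → Prop) (f : {e : E // ok e} → A) (v : V) : A :=
  ∑ e : {e : E // ok e}, ((if head e.1 = v then f e else 0) - (if tail e.1 = v then f e else 0))

/-- `b` sums to zero over every connected component of the spanning subgraph
(`b`-compatibility / locally zero-sum). -/
def Compatible {V E A : Type*} [Fintype V] [AddCommGroup A]
    (head tail : E → V) (ok : E → Prop) (b : V → A) : Prop :=
  ∀ v : V, (∑ u : V, if Reach head tail ok u v then b u else 0) = 0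

/-- A bond: a minimal nonempty edge set whose deletion changes the number of components,
equivalently a minimal nonempty edge cut. -/
def IsBond {V E : Type*} (head tail : E → V) (F : Finset E) : Prop :=
  F.Nonempty ∧ ncomp head tail (fun e => e ∉ F) ≠ ncomp head tail (fun _ => True) ∧
    ∀ F' : Finset E, F' ⊂ F → ncomp head tail (fun e => e ∉ F') = ncomp head tail (fun _ => True)

/-- Cycle rank `m(G-S) = |E(G-S)| - |V| + c(G-S)` of the spanning subgraph `G-S`. -/
noncomputable def cycRank {V E : Type*} [Fintype V] [Fintype E]
    (head tail : E → V) (S : Finset E) : ℕ :=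
  (Fintype.card E - S.card) + ncomp head tail (fun e => e ∉ S) - Fintype.card V

/-- A `b`-compatible bond. -/
def IsCBond {V E A : Type*} [Fintype V] [AddCommGroup A]
    (head tail : E → V) (b : V → A) (F : Finset E) : Prop :=
  IsBond head tail F ∧ Compatible head tail (fun e => e ∉ F) b

/-- A `b`-compatible broken bond w.r.t. the total order `lo` on edges. -/
def IsCBrokenBond {V E A : Type*} [Fintype V] [AddCommGroup A]
    (head tail : E → V) (lo : LinearOrder E) (b : V → A) (B : Finset E) : Prop :=
  ∃ F : Finset E, IsCBond head tail b F ∧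
    ∃ hne : F.Nonempty, B = F.erase (@Finset.max' E lo F hne)

/-- The signless coefficient `a_i(G,b)`: the number of `i`-edge subsets `S` with `G-S`
`b`-compatible and `S` containing no `b`-compatible broken bond. -/
noncomputable def aCoeff {V E A : Type*} [Fintype V] [Fintype E] [AddCommGroup A]
    (head tail : E → V) (lo : LinearOrder E) (b : V → A) (i : ℕ) : ℕ :=
  Nat.card {S : Finset E // S.card = i ∧ Compatible head tail (fun e => e ∉ S) b ∧
    ∀ B : Finset E, IsCBrokenBond head tail lo b B → ¬ B ⊆ S}

/-- Adjacency inside the induced subgraph on the vertex set `X`. -/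
def edgeRelIn {V E : Type*} (head tail : E → V) (X : Set V) (u v : V) : Prop :=
  ∃ e, head e ∈ X ∧ tail e ∈ X ∧ ((head e = u ∧ tail e = v) ∨ (head e = v ∧ tail e = u))

/-- Reachability within the induced subgraph on `X`. -/
def ReachIn {V E : Type*} (head tail : E → V) (X : Set V) : V → V → Prop :=
  Relation.EqvGen (edgeRelIn head tail X)

def setoidOn {V E : Type*} (head tail : E → V) (X : Set V) : Setoid {v : V // v ∈ X} :=
  ⟨fun a b => ReachIn head tail X a.1 b.1,
   ⟨fun a => Relation.EqvGen.refl a.1, fun h => Relation.EqvGen.symm _ _ h, fun h h' => Relation.EqvGen.trans _ _ _ h h'⟩⟩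

/-- Number of connected components of the induced subgraph on `X`. -/
noncomputable def ncompOn {V E : Type*} (head tail : E → V) (X : Set V) : ℕ :=
  Nat.card (Quotient (setoidOn head tail X))

/-- `X ∈ Λ(G)`: `X` nonempty, `G[X]` connected and `c(G-X) = c(G)`. -/
def InLambda {V E : Type*} [Fintype V] (head tail : E → V) (X : Finset V) : Prop :=
  X.Nonempty ∧ (∀ u ∈ X, ∀ v ∈ X, ReachIn head tail (↑X) u v) ∧
    ncompOn head tail ((↑X : Set V)ᶜ) = ncomp head tail (fun _ => True)

section Helpers

variable {V E A : Type*} [Fintype V] [AddCommGroup A] (head tail : E → V)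

theorem reach_mono {ok ok' : E → Prop} (h : ∀ e, ok e → ok' e) {u v : V}
    (hr : Reach head tail ok u v) : Reach head tail ok' u v := by
  induction hr with
  | rel x y hxy =>
    obtain ⟨e, he, hh⟩ := hxy
    exact Relation.EqvGen.rel _ _ ⟨e, h e he, hh⟩
  | refl x => exact Relation.EqvGen.refl x
  | symm x y _ ih => exact ih.symm
  | trans x y z _ _ ih1 ih2 => exact ih1.trans _ _ _ ih2

/-- A set closed under edges is closed under reachability. -/
theorem sat_iff {ok : E → Prop} {P : V → Prop}
    (hP : ∀ e, ok e → (P (head e) ↔ P (tail e))) {u v : V}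
    (hr : Reach head tail ok u v) : P u ↔ P v := by
  induction hr with
  | rel x y h =>
    obtain ⟨e, he, ⟨rfl, rfl⟩ | ⟨rfl, rfl⟩⟩ := h
    · exact hP e he
    · exact (hP e he).symm
  | refl x => exact Iff.rfl
  | symm x y _ ih => exact ih.symm
  | trans x y z _ _ ih1 ih2 => exact ih1.trans ih2

theorem reach_edge {ok : E → Prop} {e : E} (he : ok e) :
    Reach head tail ok (head e) (tail e) :=
  Relation.EqvGen.rel _ _ ⟨e, he, Or.inl ⟨rfl, rfl⟩⟩

/-- A compatible function sums to zero on every closed vertex set. -/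
theorem compat_sum {ok : E → Prop} {b : V → A} (hc : Compatible head tail ok b) {P : V → Prop}
    (hP : ∀ e, ok e → (P (head e) ↔ P (tail e))) :
    (∑ u : V, if P u then b u else 0) = 0 := by
  let Q := Quotient (Relation.EqvGen.setoid (edgeRel head tail ok))
  let π : V → Q := fun v => Quotient.mk _ v
  have hπ : ∀ u v, π u = π v ↔ Reach head tail ok u v := fun u v => Quotient.eq
  rw [← Finset.sum_fiberwise (s := Finset.univ) (g := π)]
  refine Finset.sum_eq_zero ?_
  intro q _
  obtain ⟨v, rfl⟩ := Quotient.exists_rep q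
  by_cases hv : P v
  · rw [← hc v, Finset.sum_filter]
    refine Finset.sum_congr rfl ?_
    intro u _
    by_cases hu : Reach head tail ok u v
    · have h1 : π u = Quotient.mk _ v := (hπ u v).2 hu
      have h2 : P u := (sat_iff head tail hP hu).2 hv
      rw [if_pos h1, if_pos h2, if_pos hu]
    · have h1 : ¬ π u = Quotient.mk _ v := fun h => hu ((hπ u v).1 h)
      rw [if_neg h1, if_neg hu]
  · refine Finset.sum_eq_zero ?_
    intro u hu
    have h1 : π u = π v := (Finset.mem_filter.1 hu).2
    have h2 : ¬ P u := fun h => hv ((sat_iff head tail hP ((hπ u v).1 h1)).1 h)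
    rw [if_neg h2]

theorem compat_mono {ok ok' : E → Prop} (h : ∀ e, ok e → ok' e) {b : V → A}
    (hc : Compatible head tail ok b) : Compatible head tail ok' b := by
  intro v
  refine compat_sum head tail hc (P := fun u => Reach head tail ok' u v) ?_
  intro e he
  have hr := reach_edge head tail (h e he)
  exact ⟨fun h1 => (hr.symm).trans _ _ _ h1, fun h1 => hr.trans _ _ _ h1⟩

theorem ncomp_congr {ok ok' : E → Prop}
    (h : ∀ e, ok e → ok' e)
    (h' : ∀ e, ok' e → Reach head tail ok (head e) (tail e)) :
    ncomp head tail ok = ncomp head tail ok' := by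
  have : Relation.EqvGen.setoid (edgeRel head tail ok)
      = Relation.EqvGen.setoid (edgeRel head tail ok') := by
    ext u v
    constructor
    · exact fun hr => reach_mono head tail h hr
    · intro hr
      have key : Reach head tail ok u u ↔ Reach head tail ok u v :=
        sat_iff head tail (P := fun w => Reach head tail ok u w)
          (fun e he => ⟨fun h1 => h1.trans _ _ _ (h' e he),
            fun h1 => h1.trans _ _ _ (h' e he).symm⟩) hr
      exact key.1 (Relation.EqvGen.refl u)
  unfold ncomp
  rw [this]

/-- Adding an edge between two distinct components reduces the number of components by one. -/
theorem ncomp_add {ok ok' : E → Prop} (e : E) (he : ok' e)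
    (h : ∀ e, ok e → ok' e) (h' : ∀ x, ok' x → x = e ∨ ok x)
    (hn : ¬ Reach head tail ok (head e) (tail e)) :
    ncomp head tail ok = ncomp head tail ok' + 1 := by
  let s := Relation.EqvGen.setoid (edgeRel head tail ok)
  let s' := Relation.EqvGen.setoid (edgeRel head tail ok')
  let Q := Quotient s
  let Q' := Quotient s'
  let f : Q → Q' := Quotient.map' id (fun a c hr => reach_mono head tail h hr)
  let t : Q := Quotient.mk s (tail e)
  let φ : V → Q := fun u => if Quotient.mk s u = t then Quotient.mk s (head e) else Quotient.mk s u
  have hht : Quotient.mk s (head e) ≠ t := fun hh => hn (Quotient.eq.1 hh)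
  have hφ : ∀ u v, Reach head tail ok' u v → φ u = φ v := by
    intro u v hr
    have := sat_iff head tail (P := fun w => φ u = φ w) (ok := ok') ?_ hr
    · exact this.1 rfl
    intro x hx
    have hx2 : φ (head x) = φ (tail x) := by
      rcases h' x hx with rfl | hx
      · have h1 : φ (head x) = Quotient.mk s (head x) := if_neg hht
        have h2 : φ (tail x) = Quotient.mk s (head x) := if_pos rfl
        rw [h1, h2]
      · have h1 : Quotient.mk s (head x) = Quotient.mk s (tail x) :=
          Quotient.sound (reach_edge head tail hx)
        simp only [φ, h1]
    simp only [hx2]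
  have hbij : Function.Bijective (fun q : {q : Q // q ≠ t} => f q.1) := by
    constructor
    · rintro ⟨q1, h1⟩ ⟨q2, h2⟩ hq
      obtain ⟨u, rfl⟩ := Quotient.exists_rep q1
      obtain ⟨v, rfl⟩ := Quotient.exists_rep q2
      have hr : Reach head tail ok' u v := Quotient.eq.1 hq
      have h3 := hφ u v hr
      simp only [φ, if_neg h1, if_neg h2] at h3
      exact Subtype.ext h3
    · intro q
      obtain ⟨v, rfl⟩ := Quotient.exists_rep q
      by_cases hv : Quotient.mk s v = t
      · refine ⟨⟨Quotient.mk s (head e), hht⟩, ?_⟩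
        have h1 : Reach head tail ok v (tail e) := Quotient.eq.1 hv
        exact Quotient.sound ((reach_edge head tail he).trans _ _ _ (reach_mono head tail h h1).symm)
      · exact ⟨⟨Quotient.mk s v, hv⟩, rfl⟩
  have hc := Nat.card_eq_of_bijective _ hbij
  have h2 : Nat.card (Option {q : Q // q ≠ t}) = Nat.card Q :=
    Nat.card_congr (Equiv.optionSubtypeNe t)
  rw [Finite.card_option] at h2
  unfold ncomp
  change Nat.card Q = Nat.card Q' + 1
  omega

/-- Endpoints of a bond edge are separated by the bond. -/
theorem bond_sep {F : Finset E} (hF : IsBond head tail F) {e : E} (he : e ∈ F) :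
    ¬ Reach head tail (fun x => x ∉ F) (head e) (tail e) := by
  intro hr
  obtain ⟨_, h1, h2⟩ := hF
  apply h1
  rw [← h2 (F.erase e) (Finset.erase_ssubset he)]
  refine ncomp_congr head tail ?_ ?_
  · intro x hx hx2
    exact hx (Finset.mem_of_mem_erase hx2)
  · intro x hx
    by_cases hxe : x = e
    · rw [hxe]; exact hr
    · exact reach_edge head tail (ok := fun x => x ∉ F)
        (fun h => hx (Finset.mem_erase.2 ⟨hxe, h⟩))

theorem compat_insert {b : V → A} {F S : Finset E} (hF : IsCBond head tail b F) {e : E}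
    (he : e ∈ F) (hS : ∀ x ∈ F, x ≠ e → x ∈ S)
    (hc : Compatible head tail (fun x => x ∉ S) b) :
    Compatible head tail (fun x => x ∉ insert e S) b := by
  have hsep := bond_sep head tail hF.1 he
  have hTF : ∀ x, x ∉ insert e S → x ∉ F := by
    intro x hx hxF
    apply hx
    by_cases hxe : x = e
    · simp [hxe]
    · exact Finset.mem_insert_of_mem (hS x hxF hxe)
  intro v
  set P : V → Prop := fun u => Reach head tail (fun x => x ∉ insert e S) u v with hPdef
  have hP : ∀ x, x ∉ insert e S → (P (head x) ↔ P (tail x)) := by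
    intro x hx
    have hr := reach_edge head tail (ok := fun x => x ∉ insert e S) hx
    exact ⟨fun h1 => (hr.symm).trans _ _ _ h1, fun h1 => hr.trans _ _ _ h1⟩
  -- the side of the bond containing `v`
  let X : V → Prop := fun u => Reach head tail (fun x => x ∉ F) u v
  have hX : ∀ x, x ∉ F → (X (head x) ↔ X (tail x)) := by
    intro x hx
    have hr := reach_edge head tail (ok := fun x => x ∉ F) hx
    exact ⟨fun h1 => (hr.symm).trans _ _ _ h1, fun h1 => hr.trans _ _ _ h1⟩
  have hPX : ∀ u, P u → X u := fun u hu => reach_mono head tail hTF hu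
  have hXX : ¬ (X (head e) ∧ X (tail e)) := fun ⟨h1, h2⟩ => hsep (h1.trans _ _ _ h2.symm)
  have hsplit : ∀ x, x ∉ S → x = e ∨ x ∉ insert e S := by
    intro x hx
    by_cases hxe : x = e
    · exact Or.inl hxe
    · right; simp [hxe, hx]
  by_cases hends : P (head e) ∨ P (tail e)
  · have hsumX := compat_sum head tail hF.2 (P := X) hX
    have hsumD := compat_sum head tail hc (P := fun u => X u ∧ ¬ P u) ?_
    · have : (∑ u : V, if X u then b u else 0) =
          (∑ u : V, if X u ∧ ¬ P u then b u else 0) + ∑ u : V, if P u then b u else 0 := by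
        rw [← Finset.sum_add_distrib]
        refine Finset.sum_congr rfl ?_
        intro u _
        by_cases h1 : P u
        · simp [h1, hPX u h1]
        · simp [h1]
      have hD : (∑ u : V, if X u ∧ ¬ P u then b u else 0) = 0 := by convert hsumD
      rw [hsumX, hD, zero_add] at this
      exact this.symm
    · intro x hx
      rcases hsplit x hx with rfl | hx2
      · have := hPX (head x)
        have := hPX (tail x)
        tauto
      · have h1 := hP x hx2
        have h2 := hX x (hTF x hx2)
        simp only [h1, h2]
  · refine compat_sum head tail hc (P := P) ?_
    intro x hx
    rcases hsplit x hx with rfl | hx2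
    · tauto
    · exact hP x hx2

theorem ncomp_insert {F S : Finset E} (hF : IsBond head tail F) {e : E}
    (he : e ∈ F) (heS : e ∉ S) (hS : ∀ x ∈ F, x ≠ e → x ∈ S) :
    ncomp head tail (fun x => x ∉ insert e S) = ncomp head tail (fun x => x ∉ S) + 1 := by
  refine ncomp_add head tail e heS ?_ ?_ ?_
  · intro x hx hx2
    exact hx (Finset.mem_insert_of_mem hx2)
  · intro x hx
    by_cases hxe : x = e
    · exact Or.inl hxe
    · right; simp [hxe, hx]
  · intro hr
    refine bond_sep head tail hF he (reach_mono head tail ?_ hr)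
    intro x hx hxF
    apply hx
    by_cases hxe : x = e
    · simp [hxe]
    · exact Finset.mem_insert_of_mem (hS x hxF hxe)

/-- `e` is the maximum of a compatible bond whose broken bond lies in `S`. -/
def Wit (lo : LinearOrder E) (b : V → A) (S : Finset E) (e : E) : Prop :=
  ∃ F : Finset E, IsCBond head tail b F ∧ e ∈ F ∧ (∀ x ∈ F, lo.le x e) ∧ ∀ x ∈ F, x ≠ e → x ∈ S

theorem no_broken_iff (lo : LinearOrder E) (b : V → A) (S : Finset E) :
    (∀ B : Finset E, IsCBrokenBond head tail lo b B → ¬ B ⊆ S) ↔ ∀ e, ¬ Wit head tail lo b S e := by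
  constructor
  · rintro h e ⟨F, hF, he, hmax, hS⟩
    have hne : F.Nonempty := ⟨e, he⟩
    refine h _ ⟨F, hF, hne, rfl⟩ ?_
    intro x hx
    have hx' := Finset.mem_erase.1 hx
    have hm : @Finset.max' E lo F hne = e :=
      le_antisymm (hmax _ (Finset.max'_mem F hne)) (Finset.le_max' F e he)
    rw [hm] at hx'
    exact hS x hx'.2 hx'.1
  · rintro h B ⟨F, hF, hne, rfl⟩ hB
    refine h (@Finset.max' E lo F hne) ⟨F, hF, Finset.max'_mem F hne,
      fun x hx => Finset.le_max' F x hx, fun x hx hxe => hB ?_⟩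
    exact Finset.mem_erase.2 ⟨hxe, hx⟩

/-- The least witness. -/
def MinWit (lo : LinearOrder E) (b : V → A) (S : Finset E) (e : E) : Prop :=
  Wit head tail lo b S e ∧ ∀ e', Wit head tail lo b S e' → lo.le e e'

noncomputable def tog (S : Finset E) (e : E) : Finset E := if e ∈ S then S.erase e else insert e S

theorem mem_tog {S : Finset E} {e x : E} (hx : x ≠ e) : x ∈ tog S e ↔ x ∈ S := by
  unfold tog
  split_ifs <;> simp [hx]

theorem tog_tog (S : Finset E) (e : E) : tog (tog S e) e = S := by
  by_cases h : e ∈ S <;> simp [tog, h]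

theorem tog_ne (S : Finset E) (e : E) : tog S e ≠ S := by
  intro h
  by_cases h' : e ∈ S
  · rw [← h] at h'
    have h2 : e ∈ S := h ▸ h'
    simp [tog, h2] at h'
  · apply h'
    rw [← h]
    simp [tog, h']

theorem wit_tog (lo : LinearOrder E) (b : V → A) (S : Finset E) {e e' : E} (hle : lo.le e' e) :
    Wit head tail lo b (tog S e) e' ↔ Wit head tail lo b S e' := by
  unfold Wit
  refine exists_congr fun F => and_congr_right fun _ => and_congr_right fun _ =>
    and_congr_right fun hmax => forall_congr' fun x => forall_congr' fun hx =>
    forall_congr' fun hxe => mem_tog ?_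
  rintro rfl
  exact hxe (le_antisymm (hmax x hx) hle)

theorem minwit_tog (lo : LinearOrder E) (b : V → A) (S : Finset E) {e : E}
    (h : MinWit head tail lo b S e) : MinWit head tail lo b (tog S e) e := by
  refine ⟨(wit_tog head tail lo b S le_rfl).2 h.1, ?_⟩
  intro e' he'
  rcases le_total e e' with h1 | h1
  · exact h1
  · exact h.2 e' ((wit_tog head tail lo b S h1).1 he')

theorem minwit_unique (lo : LinearOrder E) (b : V → A) (S : Finset E) {e e' : E}
    (h : MinWit head tail lo b S e) (h' : MinWit head tail lo b S e') : e = e' :=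
  le_antisymm (h.2 e' h'.1) (h'.2 e h.1)

theorem minwit_exists [Fintype E] (lo : LinearOrder E) (b : V → A) (S : Finset E)
    (h : ¬ ∀ e, ¬ Wit head tail lo b S e) : ∃ e, MinWit head tail lo b S e := by
  push Not at h
  obtain ⟨e, he⟩ := h
  obtain ⟨m, hm, hm2⟩ := Finset.exists_min_image (Finset.univ.filter fun x => Wit head tail lo b S x)
    id ⟨e, by simpa using he⟩
  refine ⟨m, by simpa using hm, fun e' he' => hm2 e' (by simpa using he')⟩

/-- The order-independent invariant attached to `S`. -/
noncomputable def rk (S : Finset E) : ℤ := (S.card : ℤ) - ncomp head tail (fun x => x ∉ S)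

theorem tog_props (lo : LinearOrder E) (b : V → A) (S : Finset E) {e : E}
    (h : Wit head tail lo b S e) (hc : Compatible head tail (fun x => x ∉ S) b) :
    Compatible head tail (fun x => x ∉ tog S e) b ∧ rk head tail (tog S e) = rk head tail S ∧
      ((-1 : ℤ)) ^ S.card + (-1) ^ (tog S e).card = 0 := by
  obtain ⟨F, hF, he, -, hS⟩ := h
  by_cases heS : e ∈ S
  · have ht : tog S e = S.erase e := by simp [tog, heS]
    rw [ht]
    have hn := ncomp_insert head tail hF.1 he (Finset.notMem_erase e S)
      (fun x hx hxe => Finset.mem_erase.2 ⟨hxe, hS x hx hxe⟩)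
    rw [Finset.insert_erase heS] at hn
    have hcard := Finset.card_erase_add_one heS
    refine ⟨compat_mono head tail (fun x hx hx2 => hx (Finset.mem_of_mem_erase hx2)) hc, ?_, ?_⟩
    · unfold rk
      rw [hn, ← hcard]
      push_cast
      ring
    · rw [← hcard]
      ring
  · have ht : tog S e = insert e S := by simp [tog, heS]
    rw [ht]
    have hn := ncomp_insert head tail hF.1 he heS hS
    refine ⟨compat_insert head tail hF he hS hc, ?_, ?_⟩
    · unfold rk
      rw [hn, Finset.card_insert_of_notMem heS]
      push_cast
      ring
    · rw [Finset.card_insert_of_notMem heS]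
      ring

/-- A compatible set without broken bonds does not disconnect. -/
theorem ncomp_good (lo : LinearOrder E) (b : V → A) (S : Finset E)
    (hc : Compatible head tail (fun x => x ∉ S) b) (h : ∀ e, ¬ Wit head tail lo b S e) :
    ncomp head tail (fun x => x ∉ S) = ncomp head tail (fun _ => True) := by
  by_contra hne
  obtain ⟨F, hF⟩ := (S.powerset.filter fun F =>
    ncomp head tail (fun x => x ∉ F) ≠ ncomp head tail (fun _ => True)).exists_minimal
      ⟨S, by simpa using hne⟩
  have hF1 := hF.1
  simp only [Finset.mem_filter, Finset.mem_powerset] at hF1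
  have hFne : F.Nonempty := by
    rw [Finset.nonempty_iff_ne_empty]
    rintro rfl
    exact hF1.2 (by simp)
  have hbond : IsBond head tail F := by
    refine ⟨hFne, hF1.2, ?_⟩
    intro F' hF'
    by_contra hcon
    refine hF'.2 (hF.2 ?_ hF'.1)
    simp only [Finset.mem_filter, Finset.mem_powerset]
    exact ⟨hF'.1.trans hF1.1, hcon⟩
  refine h (@Finset.max' E lo F hFne) ⟨F, ⟨hbond, ?_⟩, Finset.max'_mem F hFne,
    fun x hx => Finset.le_max' F x hx, fun x hx _ => hF1.1 hx⟩
  exact compat_mono head tail (fun x hx hx2 => hx (hF1.1 hx2)) hc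

theorem whitney [Fintype E] (lo : LinearOrder E) (b : V → A) (i : ℕ) :
    (∑ S : Finset E with Compatible head tail (fun x => x ∉ S) b ∧
      rk head tail S = (i : ℤ) - ncomp head tail (fun _ => True), (-1 : ℤ) ^ S.card)
      = (-1) ^ i * aCoeff head tail lo b i := by
  rw [← Finset.sum_filter_add_sum_filter_not _ (fun S => ∀ e, ¬ Wit head tail lo b S e)]
  have hbad : (∑ S ∈ (Finset.univ.filter fun S : Finset E =>
      Compatible head tail (fun x => x ∉ S) b ∧
      rk head tail S = (i : ℤ) - ncomp head tail (fun _ => True)) with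
      ¬ ∀ e, ¬ Wit head tail lo b S e, (-1 : ℤ) ^ S.card) = 0 := by
    have hex : ∀ S ∈ (Finset.univ.filter fun S : Finset E =>
      Compatible head tail (fun x => x ∉ S) b ∧
      rk head tail S = (i : ℤ) - ncomp head tail (fun _ => True)).filter
        (fun S => ¬ ∀ e, ¬ Wit head tail lo b S e), ∃ e, MinWit head tail lo b S e :=
      fun S hS => minwit_exists head tail lo b S (Finset.mem_filter.1 hS).2
    choose g hg using hex
    have hp : ∀ S hS, _ := fun S hS => tog_props head tail lo b S (hg S hS).1
      (Finset.mem_filter.1 (Finset.mem_filter.1 hS).1).2.1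
    have hmem : ∀ S hS, tog S (g S hS) ∈ (Finset.univ.filter fun S : Finset E =>
      Compatible head tail (fun x => x ∉ S) b ∧
      rk head tail S = (i : ℤ) - ncomp head tail (fun _ => True)).filter
        (fun S => ¬ ∀ e, ¬ Wit head tail lo b S e) := by
      intro S hS
      have h0 := (Finset.mem_filter.1 (Finset.mem_filter.1 hS).1).2
      refine Finset.mem_filter.2 ⟨Finset.mem_filter.2 ⟨Finset.mem_univ _, (hp S hS).1, ?_⟩, ?_⟩
      · rw [(hp S hS).2.1]
        exact h0.2
      · intro hh
        exact hh _ (minwit_tog head tail lo b S (hg S hS)).1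
    refine Finset.sum_involution (fun S hS => tog S (g S hS)) ?_ ?_ ?_ ?_
    · intro S hS
      exact (hp S hS).2.2
    · intro S hS _
      exact tog_ne _ _
    · exact hmem
    · intro S hS
      have h1 := minwit_tog head tail lo b S (hg S hS)
      have h2 := minwit_unique head tail lo b _ h1 (hg (tog S (g S hS)) (hmem S hS))
      simp only [← h2]
      exact tog_tog _ _
  rw [hbad, add_zero]
  have hset : ((Finset.univ.filter fun S : Finset E =>
      Compatible head tail (fun x => x ∉ S) b ∧
      rk head tail S = (i : ℤ) - ncomp head tail (fun _ => True)).filter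
        (fun S => ∀ e, ¬ Wit head tail lo b S e)) =
      Finset.univ.filter fun S : Finset E => S.card = i ∧
        Compatible head tail (fun e => e ∉ S) b ∧
        ∀ B : Finset E, IsCBrokenBond head tail lo b B → ¬ B ⊆ S := by
    ext S
    simp only [Finset.mem_filter, Finset.mem_univ, true_and, no_broken_iff]
    constructor
    · rintro ⟨⟨h1, h2⟩, h3⟩
      refine ⟨?_, h1, h3⟩
      rw [rk, ncomp_good head tail lo b S h1 h3] at h2
      omega
    · rintro ⟨h1, h2, h3⟩
      refine ⟨⟨h2, ?_⟩, h3⟩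
      rw [rk, ncomp_good head tail lo b S h2 h3, h1]
  rw [hset]
  unfold aCoeff
  rw [Nat.card_eq_fintype_card, Fintype.card_subtype,
    Finset.sum_congr rfl (g := fun _ => (-1 : ℤ) ^ i)
      (fun S hS => by rw [(Finset.mem_filter.1 hS).2.1])]
  rw [Finset.sum_const, nsmul_eq_mul, mul_comm]

end Helpers

/-- the coefficients `a_i(G,b)` are independent of the total edge order. -/
theorem stmt12 {V E A : Type*} [Fintype V] [Fintype E] [AddCommGroup A]
    (head tail : E → V) (lo₁ lo₂ : LinearOrder E) (b : V → A)
    (hb : Compatible head tail (fun _ => True) b) (i : ℕ) :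
    aCoeff head tail lo₁ b i = aCoeff head tail lo₂ b i := by
  have h1 := whitney head tail lo₁ b i
  have h2 := whitney head tail lo₂ b i
  have h3 := mul_left_cancel₀ (pow_ne_zero i (by norm_num : (-1 : ℤ) ≠ 0)) (h1.symm.trans h2)
  exact_mod_cast h3
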